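/- For every n ≥ 1, the polynomial R_n^B(x) has −1 as a zero of multiplicity exactly ⌊(n−1)/2⌋, and for every n ≥ 3 the polynomial R_n^D(x) has −1 as a zero of multiplicity exactly ⌊(n−1)/2⌋. -/

import Mathlib

open Finset Polynomial

/-- The word `π_1 π_2 ⋯ π_n` of a permutation of `[n] = {1,…,n}`, as a function `ℕ → ℤ`,
with the convention that positions outside `{1,…,n}` (in particular position `0`) get value `0`. -/
def permWord (n : ℕ) (σ : Equiv.Perm (Fin n)) : ℕ → ℤ := fun i =>
  if h : 1 ≤ i ∧ i ≤ n then ((σ ⟨i - 1, by omega⟩ : ℕ) : ℤ) + 1 else 0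

/-- A word changes direction at index `i`. -/
def changesDir (w : ℕ → ℤ) (i : ℕ) : Prop :=
  (w (i - 1) < w i ∧ w (i + 1) < w i) ∨ (w i < w (i - 1) ∧ w i < w (i + 1))

instance (w : ℕ → ℤ) : DecidablePred (changesDir w) := fun i => by
  unfold changesDir; infer_instance

/-- The number of alternating runs of a permutation of `[n]`:
one plus the number of indices `i ∈ {2,…,n-1}` where the word changes direction. -/
def runA (n : ℕ) (σ : Equiv.Perm (Fin n)) : ℕ :=
  1 + ((Finset.Icc 2 (n - 1)).filter (changesDir (permWord n σ))).card

/-- The run polynomial `R_n(x) = ∑_{σ ∈ S_n} x^{run σ}`. -/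
noncomputable def runPoly (n : ℕ) : Polynomial ℤ :=
  ∑ σ : Equiv.Perm (Fin n), X ^ runA n σ

/-- `altChain w b l` holds if the values of `w` along the index list `l` alternate,
starting with a strict descent if `b = true` (resp. ascent if `b = false`). -/
def altChain (w : ℕ → ℤ) : Bool → List ℕ → Prop
  | _, [] => True
  | _, [_] => True
  | b, i :: j :: rest => (if b then w j < w i else w i < w j) ∧ altChain w (!b) (j :: rest)

/-- `las n σ` : the maximum length of an alternating subsequence
`σ_{i₁} > σ_{i₂} < σ_{i₃} > ⋯` (indices strictly increasing) of `σ`. -/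
noncomputable def las (n : ℕ) (σ : Equiv.Perm (Fin n)) : ℕ :=
  sSup {k | ∃ l : List ℕ, l.length = k ∧ l.Chain' (· < ·) ∧
    (∀ i ∈ l, 1 ≤ i ∧ i ≤ n) ∧ altChain (permWord n σ) true l}

/-- The set of peaks of a permutation: indices `i ∈ {2,…,n-1}` with `σ_{i-1} < σ_i > σ_{i+1}`. -/
def peakSet (n : ℕ) (σ : Equiv.Perm (Fin n)) : Finset ℕ :=
  (Finset.Icc 2 (n - 1)).filter fun i =>
    permWord n σ (i - 1) < permWord n σ i ∧ permWord n σ (i + 1) < permWord n σ i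

/-- The set of valleys of a permutation: indices `i ∈ {2,…,n-1}` with `σ_{i-1} > σ_i < σ_{i+1}`. -/
def valleySet (n : ℕ) (σ : Equiv.Perm (Fin n)) : Finset ℕ :=
  (Finset.Icc 2 (n - 1)).filter fun i =>
    permWord n σ i < permWord n σ (i - 1) ∧ permWord n σ i < permWord n σ (i + 1)

/-- The set of left peaks of a permutation: indices `i ∈ {1,…,n-1}` with
`σ_{i-1} < σ_i > σ_{i+1}`, with the convention `σ_0 = 0`. -/
def leftPeakSet (n : ℕ) (σ : Equiv.Perm (Fin n)) : Finset ℕ :=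
  (Finset.Icc 1 (n - 1)).filter fun i =>
    permWord n σ (i - 1) < permWord n σ i ∧ permWord n σ (i + 1) < permWord n σ i

/-- The number of descents of a permutation of `[n]`. -/
def desA (n : ℕ) (σ : Equiv.Perm (Fin n)) : ℕ :=
  ((Finset.Icc 1 (n - 1)).filter fun i => permWord n σ (i + 1) < permWord n σ i).card

/-- The maximum letter (as a natural number, `0` for the empty word) of `w₂`, the longest
suffix of `w_1 ⋯ w_{i-1}` all of whose letters exceed `w i`. -/
def w2Max (w : ℕ → ℤ) (i : ℕ) : ℕ :=
  ((Finset.Ico 1 i).filter fun j => ∀ t ∈ Finset.Ico j i, w i < w t).sup fun j => (w j).toNat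

/-- The maximum letter (as a natural number, `0` for the empty word) of `w₄`, the longest
prefix of `w_{i+1} ⋯ w_n` all of whose letters exceed `w i`. -/
def w4Max (n : ℕ) (w : ℕ → ℤ) (i : ℕ) : ℕ :=
  ((Finset.Ioc i n).filter fun j => ∀ t ∈ Finset.Ioc i j, w i < w t).sup fun j => (w j).toNat

/-- André permutation of `[n]`: no double descent, no final descent, and for every
`i ∈ {2,…,n-1}`, in the `π_i`-factorization the maximum letter of `w₂` is smaller than the
maximum letter of `w₄` (maximum of the empty word being `0`). -/
def IsAndre (n : ℕ) (σ : Equiv.Perm (Fin n)) : Prop :=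
  (∀ i ∈ Finset.Icc 2 (n - 1),
      ¬(permWord n σ i < permWord n σ (i - 1) ∧ permWord n σ (i + 1) < permWord n σ i)) ∧
  permWord n σ (n - 1) < permWord n σ n ∧
  ∀ i ∈ Finset.Icc 2 (n - 1), w2Max (permWord n σ) i < w4Max n (permWord n σ) i

/-- `d_{n,i}` : the number of André permutations of `[n]` with exactly `i` descents. -/
noncomputable def andreCount (n i : ℕ) : ℕ :=
  Nat.card {σ : Equiv.Perm (Fin n) // IsAndre n σ ∧ desA n σ = i}

/-- A signed permutation of length `n`: a permutation of `[n]` together with a sign for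
each position. -/
abbrev SignedPerm (n : ℕ) := Equiv.Perm (Fin n) × (Fin n → Bool)

/-- The word `π_1 π_2 ⋯ π_n` of a signed permutation, as a function `ℕ → ℤ`, with the
convention that positions outside `{1,…,n}` (in particular position `0`) get value `0`. -/
def signedWord (n : ℕ) (π : SignedPerm n) : ℕ → ℤ := fun i =>
  if h : 1 ≤ i ∧ i ≤ n then
    (if π.2 ⟨i - 1, by omega⟩ then -(((π.1 ⟨i - 1, by omega⟩ : ℕ) : ℤ) + 1)
      else ((π.1 ⟨i - 1, by omega⟩ : ℕ) : ℤ) + 1)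
  else 0

/-- `run_B` : one plus the number of indices `i ∈ {1,…,n-1}` where the word
`0 π_1 ⋯ π_n` changes direction. -/
def runB (n : ℕ) (π : SignedPerm n) : ℕ :=
  1 + ((Finset.Icc 1 (n - 1)).filter (changesDir (signedWord n π))).card

/-- `des_B` : the number of indices `i ∈ {0,…,n-1}` with `π_i > π_{i+1}`, where `π_0 = 0`. -/
def desB (n : ℕ) (π : SignedPerm n) : ℕ :=
  ((Finset.range n).filter fun i => signedWord n π (i + 1) < signedWord n π i).card

/-- The set of valleys of a signed permutation: indices `i ∈ {1,…,n-1}` with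
`π_{i-1} > π_i < π_{i+1}`, with the convention `π_0 = 0`. -/
def valleysB (n : ℕ) (π : SignedPerm n) : Finset ℕ :=
  (Finset.Icc 1 (n - 1)).filter fun i =>
    signedWord n π i < signedWord n π (i - 1) ∧ signedWord n π i < signedWord n π (i + 1)

/-- The maximum letter of `w₂` (as an element of `WithBot ℤ`, empty word giving `⊥ = -∞`). -/
def w2MaxB (w : ℕ → ℤ) (i : ℕ) : WithBot ℤ :=
  ((Finset.Ico 1 i).filter fun j => ∀ t ∈ Finset.Ico j i, w i < w t).sup fun j =>
    (w j : WithBot ℤ)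

/-- The maximum letter of `w₄` (as an element of `WithBot ℤ`, empty word giving `⊥ = -∞`). -/
def w4MaxB (n : ℕ) (w : ℕ → ℤ) (i : ℕ) : WithBot ℤ :=
  ((Finset.Ioc i n).filter fun j => ∀ t ∈ Finset.Ioc i j, w i < w t).sup fun j =>
    (w j : WithBot ℤ)

/-- Type B André permutation: no double descent, no final descent, and for every valley `i`,
in the `π_i`-factorization the maximum letter of `w₂` is smaller than the maximum letter of
`w₄` (maximum of the empty word being `-∞`). -/
def IsAndreB (n : ℕ) (π : SignedPerm n) : Prop :=
  (∀ i ∈ Finset.Icc 1 (n - 1),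
      ¬(signedWord n π i < signedWord n π (i - 1) ∧ signedWord n π (i + 1) < signedWord n π i)) ∧
  signedWord n π (n - 1) < signedWord n π n ∧
  ∀ i ∈ valleysB n π, w2MaxB (signedWord n π) i < w4MaxB n (signedWord n π) i

/-- The number of negative letters of a signed permutation. -/
def negCount (n : ℕ) (π : SignedPerm n) : ℕ :=
  (Finset.univ.filter fun i => π.2 i = true).card

/-- `R_n^{B,>}(x)`. -/
noncomputable def runPolyBgt (n : ℕ) : Polynomial ℤ :=
  ∑ π : SignedPerm n, if 0 < signedWord n π 1 then X ^ runB n π else 0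

/-- `R_n^{B,<}(x)`. -/
noncomputable def runPolyBlt (n : ℕ) : Polynomial ℤ :=
  ∑ π : SignedPerm n, if signedWord n π 1 < 0 then X ^ runB n π else 0

/-- `R_n^{B}(x)`. -/
noncomputable def runPolyB (n : ℕ) : Polynomial ℤ :=
  ∑ π : SignedPerm n, X ^ runB n π

/-- `R_n^{D,>}(x)`. -/
noncomputable def runPolyDgt (n : ℕ) : Polynomial ℤ :=
  ∑ π : SignedPerm n, if Even (negCount n π) ∧ 0 < signedWord n π 1 then X ^ runB n π else 0

/-- `R_n^{D,<}(x)`. -/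
noncomputable def runPolyDlt (n : ℕ) : Polynomial ℤ :=
  ∑ π : SignedPerm n, if Even (negCount n π) ∧ signedWord n π 1 < 0 then X ^ runB n π else 0

/-- `R_n^{D}(x)`. -/
noncomputable def runPolyD (n : ℕ) : Polynomial ℤ :=
  ∑ π : SignedPerm n, if Even (negCount n π) then X ^ runB n π else 0

/-- The Eulerian polynomial `A_n(x) = ∑_{σ ∈ S_n} x^{des(σ)+1}`. -/
noncomputable def eulerianA (n : ℕ) : Polynomial ℤ :=
  ∑ σ : Equiv.Perm (Fin n), X ^ (desA n σ + 1)

/-- The type B Eulerian polynomial `B_n(x) = ∑_{π ∈ 𝔅_n} x^{des_B(π)}`. -/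
noncomputable def eulerianB (n : ℕ) : Polynomial ℤ :=
  ∑ π : SignedPerm n, X ^ desB n π

/-- `b̄_{n,k}` : the number of type B André permutations of length `n` with `des_B` equal
to `k`. -/
noncomputable def andreBCountDes (n k : ℕ) : ℕ :=
  Nat.card {π : SignedPerm n // IsAndreB n π ∧ desB n π = k}

/-- `b̂_{n,j}` : the number of type B André permutations of length `n` with exactly `j`
valleys. -/
noncomputable def andreBCountVal (n j : ℕ) : ℕ :=
  Nat.card {π : SignedPerm n // IsAndreB n π ∧ (valleysB n π).card = j}

/-- `d̃_{n,k}` : the number of type D André permutations of length `n` (type B André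
permutations with an even number of negative letters) with exactly `k` valleys. -/
noncomputable def andreDCountVal (n k : ℕ) : ℕ :=
  Nat.card {π : SignedPerm n //
    IsAndreB n π ∧ Even (negCount n π) ∧ (valleysB n π).card = k}

/-- The number of permutations of `[n]` with exactly `j` left peaks. -/
noncomputable def leftPeakCount (n j : ℕ) : ℕ :=
  Nat.card {σ : Equiv.Perm (Fin n) // (leftPeakSet n σ).card = j}

/-- `R_n` evaluated at a real number. -/
noncomputable def runPolyReal (n : ℕ) (x : ℝ) : ℝ :=
  ∑ σ : Equiv.Perm (Fin n), x ^ runA n σ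

/-- `A_n` evaluated at a real number. -/
noncomputable def eulerianAReal (n : ℕ) (x : ℝ) : ℝ :=
  ∑ σ : Equiv.Perm (Fin n), x ^ (desA n σ + 1)

/-- `R_n^{B,>}` evaluated at a real number. -/
noncomputable def runPolyBgtReal (n : ℕ) (x : ℝ) : ℝ :=
  ∑ π : SignedPerm n, if 0 < signedWord n π 1 then x ^ runB n π else 0

/-- `B_n` evaluated at a real number. -/
noncomputable def eulerianBReal (n : ℕ) (x : ℝ) : ℝ :=
  ∑ π : SignedPerm n, x ^ desB n π


/-! ### Insertion of the largest letter -/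

/-- Insert the value `n` (the largest) at position `p`. -/
def insPerm {n : ℕ} (σ : Equiv.Perm (Fin n)) (p : Fin (n + 1)) : Equiv.Perm (Fin (n + 1)) :=
  ((finSuccEquiv' p).trans (Equiv.optionCongr σ)).trans (finSuccEquiv' (Fin.last n)).symm

lemma insPerm_self {n : ℕ} (σ : Equiv.Perm (Fin n)) (p : Fin (n + 1)) :
    insPerm σ p p = Fin.last n := by
  simp [insPerm]

lemma insPerm_succAbove {n : ℕ} (σ : Equiv.Perm (Fin n)) (p : Fin (n + 1)) (j : Fin n) :
    insPerm σ p (p.succAbove j) = (σ j).castSucc := by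
  simp [insPerm]

/-- Insert the letter `±(n+1)` at position `p`. -/
def insS {n : ℕ} (x : SignedPerm n × Fin (n + 1) × Bool) : SignedPerm (n + 1) :=
  (insPerm x.1.1 x.2.1, Fin.insertNth (α := fun _ => Bool) x.2.1 x.2.2 x.1.2)

lemma insS_injective (n : ℕ) : Function.Injective (insS (n := n)) := by
  rintro ⟨⟨σ, e⟩, p, s⟩ ⟨⟨τ, f⟩, q, t⟩ h
  simp only [insS, Prod.mk.injEq] at h
  obtain ⟨h1, h2⟩ := h
  have hp : p = q := by
    apply (insPerm τ q).injective
    rw [insPerm_self, ← h1, insPerm_self]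
  subst hp
  have h3 : σ = τ := by
    ext j
    have := congrArg (fun k => k (p.succAbove j)) h1
    simp only [insPerm_succAbove] at this
    exact congrArg Fin.val (Fin.castSucc_injective _ this)
  have h4 : s = t := by simpa using congrFun h2 p
  have h5 : e = f := by
    ext j
    have := congrFun h2 (p.succAbove j)
    simpa using this
  subst h3 h4 h5
  rfl

lemma insS_bijective (n : ℕ) : Function.Bijective (insS (n := n)) := by
  rw [Fintype.bijective_iff_injective_and_card]
  refine ⟨insS_injective n, ?_⟩
  simp [Fintype.card_perm, Nat.factorial_succ, pow_succ]
  ring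

lemma signedWord_insS {n : ℕ} (π : SignedPerm n) (p : Fin (n + 1)) (s : Bool) (i : ℕ) :
    signedWord (n + 1) (insS (π, p, s)) i =
      if i ≤ p then signedWord n π i
      else if i = p + 1 then (if s then -((n : ℤ) + 1) else (n : ℤ) + 1)
      else signedWord n π (i - 1) := by
  have key : ∀ j : Fin n, signedWord (n+1) (insS (π, p, s)) ((p.succAbove j : ℕ) + 1) =
      signedWord n π (j + 1) := by
    intro j
    have h1 : 1 ≤ (p.succAbove j : ℕ) + 1 ∧ (p.succAbove j : ℕ) + 1 ≤ n + 1 := by omega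
    have h2 : 1 ≤ (j : ℕ) + 1 ∧ (j : ℕ) + 1 ≤ n := by omega
    simp only [signedWord, h1, h2, dif_pos, and_self, Nat.add_sub_cancel, Fin.eta, insS,
      insPerm_succAbove, Fin.insertNth_apply_succAbove]
    simp
  have key2 : signedWord (n+1) (insS (π, p, s)) ((p : ℕ) + 1) =
      (if s then -((n : ℤ) + 1) else (n : ℤ) + 1) := by
    have h1 : 1 ≤ (p : ℕ) + 1 ∧ (p : ℕ) + 1 ≤ n + 1 := by omega
    simp only [signedWord, h1, dif_pos, and_self, Nat.add_sub_cancel, Fin.eta, insS,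
      insPerm_self, Fin.insertNth_apply_same]
    simp
  split_ifs with h1 h2 h3
  · rcases Nat.eq_zero_or_pos i with h0 | h0
    · subst h0; simp [signedWord]
    · have := key ⟨i - 1, by omega⟩
      rw [Fin.succAbove_of_castSucc_lt _ _ (by simp [Fin.lt_def]; omega)] at this
      simpa [Nat.sub_add_cancel h0] using this
  · rw [h2, key2, if_pos h3]
  · rw [h2, key2, if_neg h3]
  · by_cases h4 : i ≤ n + 1
    · have := key ⟨i - 2, by omega⟩
      rw [Fin.succAbove_of_le_castSucc _ _ (by simp [Fin.le_def]; omega)] at this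
      simp only [Fin.val_succ] at this
      rw [show i - 2 + 1 = i - 1 by omega, show i - 1 + 1 = i by omega] at this
      exact this
    · have h5 : ¬ (1 ≤ i ∧ i ≤ n + 1) := by omega
      have h6 : ¬ (1 ≤ i - 1 ∧ i - 1 ≤ n) := by omega
      simp only [signedWord, h5, h6, dif_neg, not_false_eq_true]

lemma signedWord_bound {n : ℕ} (π : SignedPerm n) (i : ℕ) :
    -((n : ℤ) + 1) < signedWord n π i ∧ signedWord n π i < (n : ℤ) + 1 := by
  unfold signedWord
  split_ifs with h h'
  · have := (π.1 ⟨i - 1, by omega⟩).2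
    constructor <;> omega
  · have := (π.1 ⟨i - 1, by omega⟩).2
    constructor <;> omega
  · constructor <;> omega

lemma signedWord_ne {n : ℕ} (π : SignedPerm n) (i : ℕ) (hi : i < n) :
    signedWord n π i ≠ signedWord n π (i + 1) := by
  have h2 : 1 ≤ i + 1 ∧ i + 1 ≤ n := by omega
  by_cases h1 : 1 ≤ i ∧ i ≤ n
  · have h3 : (π.1 ⟨i - 1, by omega⟩ : ℕ) ≠ (π.1 ⟨i + 1 - 1, by omega⟩ : ℕ) := by
      intro h
      have := π.1.injective (Fin.ext h)
      simp at this
      omega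
    simp only [signedWord, h1, h2, dif_pos, and_self]
    split_ifs <;> omega
  · simp only [signedWord, h1, h2, dif_pos, dif_neg, and_self, not_false_eq_true]
    split_ifs <;> omega

/-- The up/down word of `0 π_1 ⋯ π_n`. -/
def dirs (n : ℕ) (π : SignedPerm n) : List Bool :=
  (List.range n).map fun i => decide (signedWord n π i < signedWord n π (i + 1))

@[simp] lemma dirs_length (n : ℕ) (π : SignedPerm n) : (dirs n π).length = n := by
  simp [dirs]

lemma dirs_insS_last {n : ℕ} (π : SignedPerm n) (s : Bool) :
    dirs (n + 1) (insS (π, Fin.last n, s)) = dirs n π ++ [!s] := by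
  have hb := signedWord_bound π n
  unfold dirs
  rw [List.range_succ, List.map_append]
  congr 1
  · apply List.map_congr_left
    intro i hi
    rw [List.mem_range] at hi
    rw [signedWord_insS, signedWord_insS]
    have h1 : i ≤ n := by omega
    have h2 : i + 1 ≤ n := by omega
    simp [h1, h2]
  · simp only [List.map_cons, List.map_nil, signedWord_insS]
    cases s <;> simp <;> omega

lemma dirs_insS_lt {n : ℕ} (π : SignedPerm n) (p : ℕ) (hp : p < n) (s : Bool) :
    dirs (n + 1) (insS (π, (Fin.castSucc ⟨p, hp⟩), s)) =
      (dirs n π).take p ++ (!s) :: s :: (dirs n π).drop (p + 1) := by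
  have hb := signedWord_bound π p
  have hb' := signedWord_bound π (p + 1)
  apply List.ext_getElem
  · simp; omega
  intro i h1 h2
  have hi : i < n + 1 := by simpa using h1
  simp only [dirs, List.getElem_map, List.getElem_range, signedWord_insS, Fin.val_castSucc]
  rw [List.getElem_append]
  rcases lt_trichotomy i p with h | h | h
  · have e1 : i ≤ p := by omega
    have e2 : i + 1 ≤ p := by omega
    have e3 : i < n := by omega
    simp [e1, e2, h, e3]
  · subst h
    cases s <;> simp [hp.le] <;> omega
  · have e1 : ¬ i ≤ p := by omega
    have e2 : ¬ i + 1 ≤ p := by omega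
    have e3 : ¬ i < p := by omega
    have e4 : min p n = p := by omega
    obtain ⟨d, rfl⟩ : ∃ d, i = p + 1 + d := ⟨i - (p + 1), by omega⟩
    have e5 : p + 1 + d - p = d + 1 := by omega
    rcases d with _ | d
    · cases s <;> simp [e4] <;> omega
    · have e6 : p + 1 + (d + 1) - 1 = p + 1 + d := by omega
      have e7 : ¬ (p + 1 + (d + 1) ≤ p) := by omega
      have e8 : ¬ (p + 1 + (d + 1) + 1 ≤ p) := by omega
      have e9 : ¬ (p + 1 + (d + 1) < p) := by omega
      have e10 : ¬ (p + 1 + (d + 1) = p) := by omega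
      simp [e4, e5, e6, e7, e8, e9, e10]
      rfl

/-- The weight `ε ^ (number of negative letters)`. -/
def sgnW (ε : ℤ) {n : ℕ} (π : SignedPerm n) : ℤ := ∏ i, if π.2 i then ε else 1

lemma sgnW_insS (ε : ℤ) {n : ℕ} (π : SignedPerm n) (p : Fin (n + 1)) (s : Bool) :
    sgnW ε (insS (π, p, s)) = (if s then ε else 1) * sgnW ε π := by
  unfold sgnW
  rw [Fin.prod_univ_succAbove _ p]
  simp [insS]

lemma sgnW_eq (ε : ℤ) {n : ℕ} (π : SignedPerm n) : sgnW ε π = ε ^ negCount n π := by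
  unfold sgnW negCount
  rw [Finset.prod_ite]; simp

lemma sum_insS (ε : ℤ) (n : ℕ) (G : List Bool → ℤ) :
    ∑ π : SignedPerm (n + 1), sgnW ε π * G (dirs (n + 1) π) =
      ∑ π : SignedPerm n, sgnW ε π *
        (∑ i ∈ range n, (G ((dirs n π).take i ++ true :: false :: (dirs n π).drop (i + 1)) +
          ε * G ((dirs n π).take i ++ false :: true :: (dirs n π).drop (i + 1))) +
          (G (dirs n π ++ [true]) + ε * G (dirs n π ++ [false]))) := by
  rw [← Function.Bijective.sum_comp (insS_bijective n), Fintype.sum_prod_type]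
  refine Finset.sum_congr rfl fun π _ => ?_
  rw [Fintype.sum_prod_type, Fin.sum_univ_castSucc, mul_add, Finset.mul_sum, Finset.sum_range]
  congr 1
  · refine Finset.sum_congr rfl fun i _ => ?_
    simp only [Fintype.sum_bool, sgnW_insS]
    have h := fun s => dirs_insS_lt π i i.2 s
    simp only [Fin.eta] at h
    rw [h, h]
    simp; ring
  · simp only [Fintype.sum_bool, sgnW_insS, dirs_insS_last]
    simp; ring

/-! ### Characters -/

/-- One factor of a character. -/
def sg (b c : Bool) : ℤ := if b then (if c then 1 else -1) else 1

/-- The product of the signs of the directions `w` over the positions selected by the mask. -/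
def chi : List Bool → List Bool → ℤ
  | b :: m, c :: w => sg b c * chi m w
  | _, _ => 1

lemma chi_append : ∀ (l a r b : List Bool), l.length = a.length →
    chi (l ++ r) (a ++ b) = chi l a * chi r b
  | [], [], r, b, _ => by simp [chi]
  | x :: l, y :: a, r, b, h => by
      simp only [List.cons_append, chi]
      rw [chi_append l a r b (by simpa using h), mul_assoc]
  | [], _ :: _, _, _, h => by simp at h
  | _ :: _, [], _, _, h => by simp at h

/-- Weighted character sum over all signed permutations. -/
def charSum (ε : ℤ) (n : ℕ) (m : List Bool) : ℤ :=
  ∑ π : SignedPerm n, sgnW ε π * chi m (dirs n π)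

/-- weight of an interior insertion -/
def wtI (ε : ℤ) (b c : Bool) : ℤ := sg b true * sg c false + ε * (sg b false * sg c true)

/-- weight of a final insertion -/
def wtL (ε : ℤ) (b : Bool) : ℤ := sg b true + ε * sg b false

/-- Collapse positions `i, i+1` of the mask to one unselected position. -/
def collapse (m : List Bool) (i : ℕ) : List Bool := m.take i ++ false :: m.drop (i + 2)

lemma mask_split (m : List Bool) (i : ℕ) (h : i + 1 < m.length) :
    m = m.take i ++ m.getD i false :: m.getD (i + 1) false :: m.drop (i + 2) := by
  conv_lhs => rw [← List.take_append_drop i m]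
  congr 1
  rw [List.drop_eq_getElem_cons (by omega), List.drop_eq_getElem_cons h]
  simp [h, show i < m.length by omega]

lemma mask_split_last (m : List Bool) (n : ℕ) (h : m.length = n + 1) :
    m = m.take n ++ [m.getD n false] := by
  conv_lhs => rw [← List.take_append_drop n m]
  congr 1
  rw [List.drop_eq_getElem_cons (by omega), List.drop_eq_nil_of_le (by omega)]
  simp [h]

lemma charSum_succ (ε : ℤ) (n : ℕ) (m : List Bool) (hm : m.length = n + 1) :
    charSum ε (n + 1) m =
      ∑ i ∈ range n, wtI ε (m.getD i false) (m.getD (i + 1) false) * charSum ε n (collapse m i) +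
        wtL ε (m.getD n false) * charSum ε n (m.take n) := by
  unfold charSum
  rw [sum_insS ε n (chi m)]
  simp_rw [Finset.mul_sum]
  rw [Finset.sum_comm, ← Finset.sum_add_distrib]
  refine Finset.sum_congr rfl fun π _ => ?_
  rw [mul_add, Finset.mul_sum]
  have hw := dirs_length n π
  set w := dirs n π with hwdef
  clear_value w
  congr 1
  · refine Finset.sum_congr rfl fun i hi => ?_
    rw [Finset.mem_range] at hi
    have hs := mask_split m i (by omega)
    have h1 : ∀ c d : Bool, chi m (w.take i ++ c :: d :: w.drop (i + 1)) =
        chi (m.take i) (w.take i) * (sg (m.getD i false) c * (sg (m.getD (i + 1) false) d *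
          chi (m.drop (i + 2)) (w.drop (i + 1)))) := by
      intro c d
      conv_lhs => rw [hs]
      rw [chi_append _ _ _ _ (by simp; omega)]
      simp only [chi]
    have h2 : chi (collapse m i) w =
        chi (m.take i) (w.take i) * chi (m.drop (i + 2)) (w.drop (i + 1)) := by
      unfold collapse
      conv_lhs => rw [← List.take_append_drop i w]
      rw [chi_append _ _ _ _ (by simp; omega),
        List.drop_eq_getElem_cons (l := w) (i := i) (by omega)]
      simp [chi, sg]
    rw [h1, h1, h2]
    unfold wtI
    ring
  · have h1 : ∀ c : Bool, chi m (w ++ [c]) = chi (m.take n) w * sg (m.getD n false) c := by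
      intro c
      conv_lhs => rw [mask_split_last m n hm]
      rw [chi_append _ _ _ _ (by simp; omega)]
      simp [chi]
    rw [h1, h1]
    unfold wtL
    ring

lemma collapse_length (m : List Bool) (n i : ℕ) (hm : m.length = n + 1) (hi : i < n) :
    (collapse m i).length = n := by
  simp [collapse]; omega

lemma charSum_zero (ε : ℤ) : charSum ε 0 [] = 1 := by
  simp [charSum, sgnW, chi]

lemma charSum_neg (n : ℕ) : ∀ m : List Bool, m.length = n →
    charSum (-1) n m = if false ∈ m then 0 else 2 ^ n := by
  induction n with
  | zero => 
    intro m hm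
    rw [List.length_eq_zero_iff] at hm
    subst hm
    simp [charSum_zero]
  | succ n ih =>
    intro m hm
    rw [charSum_succ _ _ _ hm, Finset.sum_eq_zero, zero_add]
    · rw [ih _ (by simp; omega)]
      conv_rhs => rw [mask_split_last m n hm]
      cases m.getD n false
      · simp [wtL, sg]
      · by_cases h : false ∈ m.take n
        · simp [h]
        · simp [h, wtL, sg, pow_succ]; ring
    · intro i hi
      rw [Finset.mem_range] at hi
      rw [ih _ (collapse_length m n i hm hi)]
      simp [collapse]

/-! ### Tiled masks -/

/-- Masks that are concatenations of the blocks `0` and `11`. -/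
inductive Tiled : List Bool → Prop
  | nil : Tiled []
  | zero {m : List Bool} : Tiled m → Tiled (false :: m)
  | two {m : List Bool} : Tiled m → Tiled (true :: true :: m)

lemma Tiled.append {l r : List Bool} (hl : Tiled l) (hr : Tiled r) : Tiled (l ++ r) := by
  induction hl with
  | nil => exact hr
  | zero _ ih => exact ih.zero
  | two _ ih => exact ih.two

lemma Tiled.split {m : List Bool} (h : Tiled m) : ∀ l r : List Bool, m = l ++ false :: r →
    Tiled l ∧ Tiled r := by
  induction h with
  | nil => intro l r h; simp at h
  | zero hm ih =>
    intro l r h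
    rcases l with _ | ⟨a, l⟩
    · simp at h; subst h; exact ⟨.nil, hm⟩
    · simp at h
      obtain ⟨rfl, h⟩ := h
      exact ⟨(ih l r h).1.zero, (ih l r h).2⟩
  | two hm ih =>
    intro l r h
    rcases l with _ | ⟨a, _ | ⟨b, l⟩⟩
    · simp at h
    · simp at h
    · simp at h
      obtain ⟨rfl, rfl, h⟩ := h
      exact ⟨(ih l r h).1.two, (ih l r h).2⟩

lemma Tiled.last {m : List Bool} (h : Tiled m) :
    m = [] ∨ ∃ l, Tiled l ∧ (m = l ++ [false] ∨ m = l ++ [true, true]) := by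
  induction h with
  | nil => left; rfl
  | zero hm ih =>
    right
    rcases ih with rfl | ⟨l, hl, rfl | rfl⟩
    · exact ⟨[], .nil, by simp⟩
    · exact ⟨false :: l, hl.zero, by simp⟩
    · exact ⟨false :: l, hl.zero, by simp⟩
  | two hm ih =>
    right
    rcases ih with rfl | ⟨l, hl, rfl | rfl⟩
    · exact ⟨[], .nil, by simp⟩
    · exact ⟨_, hl.two, by simp⟩
    · exact ⟨_, hl.two, by simp⟩

lemma Tiled.replicate (k : ℕ) : Tiled (List.replicate (2 * k) true) := by
  induction k with
  | zero => exact .nil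
  | succ k ih => 
    rw [show 2 * (k + 1) = 2 * k + 1 + 1 by ring, List.replicate_succ, List.replicate_succ]
    exact ih.two

lemma Tiled.count_even {m : List Bool} (h : Tiled m) : Even (m.count true) := by
  induction h with
  | nil => simp
  | zero _ ih => simpa using ih
  | two _ ih => simp [Nat.even_add_one, ih]

/-- Normalized character sum. -/
def nsum (n : ℕ) (m : List Bool) : ℤ := (-1) ^ (m.count true / 2) * charSum 1 n m

/-- A normalized term of the recursion. -/
def tm (n : ℕ) (m : List Bool) (i : ℕ) : ℤ :=
  (-1) ^ (m.count true / 2) *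
    (wtI 1 (m.getD i false) (m.getD (i + 1) false) * charSum 1 n (collapse m i))

/-- The normalized last term of the recursion. -/
def tl (n : ℕ) (m : List Bool) : ℤ :=
  (-1) ^ (m.count true / 2) * (wtL 1 (m.getD n false) * charSum 1 n (m.take n))

lemma nsum_succ (n : ℕ) (m : List Bool) (hm : m.length = n + 1) :
    nsum (n + 1) m = ∑ i ∈ range n, tm n m i + tl n m := by
  unfold nsum tm tl
  rw [charSum_succ 1 n m hm, mul_add, Finset.mul_sum]

/-- inductive claim -/
def Claim (n : ℕ) : Prop := ∀ m : List Bool, m.length = n →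
  (¬ Tiled m → charSum 1 n m = 0) ∧ (Tiled m → 2 ^ n ≤ nsum n m)

lemma tm_eq (n : ℕ) (m : List Bool) (hm : m.length = n + 1) (i : ℕ)
    (hi : i < n) (h : m.getD i false = m.getD (i + 1) false) :
    tm n m i = 2 * nsum n (collapse m i) := by
  have hs := mask_split m i (by omega)
  rw [← h] at hs
  have hc : m.count true = (collapse m i).count true + 2 * (m.getD i false).toNat := by
    conv_lhs => rw [hs]
    unfold collapse
    cases m.getD i false <;> simp <;> ring
  unfold tm nsum
  rw [← h, hc]
  cases m.getD i false
  · simp [wtI, sg]; ring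
  · simp [wtI, sg, pow_succ]; ring

lemma tm_eq_zero (n : ℕ) (m : List Bool) (i : ℕ)
    (h : m.getD i false ≠ m.getD (i + 1) false) : tm n m i = 0 := by
  unfold tm
  revert h
  cases m.getD i false <;> cases m.getD (i + 1) false <;> simp [wtI, sg]

lemma tl_eq (n : ℕ) (m : List Bool) (hm : m.length = n + 1) (h : m.getD n false = false) :
    tl n m = 2 * nsum n (m.take n) := by
  have hs := mask_split_last m n hm
  rw [h] at hs
  have hc : m.count true = (m.take n).count true := by
    conv_lhs => rw [hs]
    simp
  unfold tl nsum
  rw [h, hc]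
  simp [wtL, sg]; ring

lemma tl_eq_zero (n : ℕ) (m : List Bool) (h : m.getD n false = true) : tl n m = 0 := by
  unfold tl
  rw [h]
  simp [wtL, sg]

lemma Claim.nonneg {n : ℕ} (h : Claim n) (m : List Bool) (hm : m.length = n) : 0 ≤ nsum n m := by
  by_cases ht : Tiled m
  · exact le_trans (by positivity) ((h m hm).2 ht)
  · unfold nsum; rw [(h m hm).1 ht]; simp

lemma tm_nonneg {n : ℕ} (hC : Claim n) (m : List Bool) (hm : m.length = n + 1) (i : ℕ)
    (hi : i < n) : 0 ≤ tm n m i := by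
  by_cases h : m.getD i false = m.getD (i + 1) false
  · rw [tm_eq n m hm i hi h]
    have := hC.nonneg _ (collapse_length m n i hm hi)
    omega
  · rw [tm_eq_zero n m i h]

lemma tl_nonneg {n : ℕ} (hC : Claim n) (m : List Bool) (hm : m.length = n + 1) : 0 ≤ tl n m := by
  cases h : m.getD n false
  · rw [tl_eq n m hm h]
    have := hC.nonneg (m.take n) (by simp; omega)
    omega
  · rw [tl_eq_zero n m h]

lemma tm_ge {n : ℕ} (hC : Claim n) (m : List Bool) (hm : m.length = n + 1) (i : ℕ)
    (hi : i < n) (h : m.getD i false = m.getD (i + 1) false) (ht : Tiled (collapse m i)) :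
    2 ^ (n + 1) ≤ tm n m i := by
  rw [tm_eq n m hm i hi h, pow_succ]
  have := (hC _ (collapse_length m n i hm hi)).2 ht
  omega

lemma claim_all (n : ℕ) : Claim n := by
  induction n with
  | zero =>
    intro m hm
    rw [List.length_eq_zero_iff] at hm
    subst hm
    exact ⟨fun h => absurd .nil h, fun _ => by simp [nsum, charSum_zero]⟩
  | succ n ih =>
    intro m hm
    constructor
    · intro hT
      rw [charSum_succ 1 n m hm, Finset.sum_eq_zero, zero_add]
      · cases h : m.getD n false
        · have hs := mask_split_last m n hm
          rw [(ih (m.take n) (by simp; omega)).1, mul_zero]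
          intro h'
          apply hT
          rw [hs, h]
          exact h'.append (Tiled.nil.zero)
        · simp [wtL, sg]
      · intro i hi
        rw [Finset.mem_range] at hi
        by_cases h : m.getD i false = m.getD (i + 1) false
        · have hs := mask_split m i (by omega)
          rw [(ih _ (collapse_length m n i hm hi)).1, mul_zero]
          intro h'
          apply hT
          have hlr := h'.split _ _ rfl
          rw [hs, ← h]
          cases m.getD i false
          · exact hlr.1.append hlr.2.zero.zero
          · exact hlr.1.append hlr.2.two
        · revert h
          cases m.getD i false <;> cases m.getD (i + 1) false <;> simp [wtI, sg]
    · intro hT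
      rw [nsum_succ n m hm]
      have h0 : 0 ≤ ∑ i ∈ range n, tm n m i :=
        Finset.sum_nonneg fun i hi => tm_nonneg ih m hm i (Finset.mem_range.1 hi)
      rcases hT.last with rfl | ⟨l, hl, rfl | rfl⟩
      · simp at hm
      · simp at hm
        subst hm
        rw [tl_eq _ _ (by simp) (by simp)]
        have := (ih l rfl).2 hl
        simp [pow_succ]
        omega
      · simp at hm
        obtain rfl : n = l.length + 1 := by omega
        have h1 := tm_ge ih (l ++ [true, true]) (by simp) l.length (by omega) (by simp)
          (by simpa [collapse] using hl.append Tiled.nil.zero)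
        have h2 := Finset.single_le_sum (f := fun i => tm (l.length + 1) (l ++ [true, true]) i)
          (fun i hi => tm_nonneg ih _ (by simp) i (Finset.mem_range.1 hi))
          (Finset.mem_range.2 (Nat.lt_succ_self l.length))
        have h3 := tl_nonneg ih (l ++ [true, true]) (by simp)
        linarith

lemma nsum_replicate (k : ℕ) (hk : 2 ≤ k) :
    2 ^ (2 * k + 1) ≤ nsum (2 * k) (List.replicate (2 * k) true) := by
  obtain ⟨j, rfl⟩ : ∃ j, k = j + 2 := ⟨k - 2, by omega⟩
  obtain ⟨n, hn⟩ : ∃ n, n = 2 * j + 3 := ⟨_, rfl⟩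
  rw [show 2 * (j + 2) = n + 1 by omega]
  have hC := claim_all n
  have hm : (List.replicate (n + 1) true).length = n + 1 := by simp
  rw [nsum_succ n _ hm]
  have h3 := tl_nonneg hC _ hm
  have ha := tm_ge hC _ hm 0 (by omega)
    (by simp [show 0 < n by omega]) (by
    have := (Tiled.replicate (j + 1)).zero
    simp [collapse]
    rwa [show n - 1 = 2 * (j + 1) by omega])
  have hb := tm_ge hC _ hm (2 * j + 2) (by omega)
    (by simp [show 2 * j + 2 < n + 1 by omega, show 2 * j + 2 + 1 < n + 1 by omega]) (by
    have := (Tiled.replicate (j + 1)).append Tiled.nil.zero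
    simp [collapse]
    rw [show n - (2 * j + 3) = 0 by omega,
      show min (2 * j + 2) (n + 1) = 2 * (j + 1) by omega]
    simpa using this)
  have h2 : ∑ i ∈ ({0, 2 * j + 2} : Finset ℕ), tm n (List.replicate (n + 1) true) i ≤ 
      ∑ i ∈ range n, tm n (List.replicate (n + 1) true) i := by
    apply Finset.sum_le_sum_of_subset_of_nonneg
    · intro i hi
      simp at hi ⊢
      omega
    · intro i hi _
      exact tm_nonneg hC _ hm i (Finset.mem_range.1 hi)
  rw [Finset.sum_pair (by omega)] at h2
  rw [pow_succ]
  linarith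

/-! ### Runs and the character expansion -/

/-- number of changes in a Boolean word -/
def chg : List Bool → ℕ
  | a :: b :: l => (if a = b then 0 else 1) + chg (b :: l)
  | _ => 0

lemma chg_map (k : ℕ) : ∀ g : ℕ → Bool, chg ((List.range (k + 1)).map g) =
    ∑ i ∈ range k, if g i = g (i + 1) then 0 else 1 := by
  induction k with
  | zero => intro g; simp [chg]
  | succ k ih =>
    intro g
    have := ih (fun i => g (i + 1))
    rw [Finset.sum_range_succ', ← this, List.range_succ_eq_map (n := k + 1),
      List.range_succ_eq_map (n := k)]
    simp [chg, List.map_map, Function.comp_def, add_comm]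

lemma runB_eq (n : ℕ) (hn : 1 ≤ n) (π : SignedPerm n) : runB n π = 1 + chg (dirs n π) := by
  obtain ⟨k, rfl⟩ : ∃ k, n = k + 1 := ⟨n - 1, by omega⟩
  unfold runB dirs
  rw [chg_map, Finset.card_filter, Nat.add_sub_cancel]
  congr 1
  have : Finset.Icc 1 k = Finset.Ico 1 (k + 1) := by ext i; simp [Nat.lt_succ_iff]
  rw [this, Finset.sum_Ico_eq_sum_range, Nat.add_sub_cancel]
  refine Finset.sum_congr rfl fun i hi => ?_
  rw [Finset.mem_range] at hi
  have h1 := signedWord_ne π i (by omega)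
  have h2 := signedWord_ne π (i + 1) (by omega)
  have hiff : changesDir (signedWord (k + 1) π) (1 + i) ↔
      ¬ (decide (signedWord (k + 1) π i < signedWord (k + 1) π (i + 1)) =
        decide (signedWord (k + 1) π (i + 1) < signedWord (k + 1) π (i + 1 + 1))) := by
    unfold changesDir
    rw [show 1 + i - 1 = i by omega, show 1 + i = i + 1 by omega, decide_eq_decide]
    generalize signedWord (k + 1) π i = a at *
    generalize signedWord (k + 1) π (i + 1) = b at *
    generalize signedWord (k + 1) π (i + 1 + 1) = c at *
    omega
  by_cases h : changesDir (signedWord (k + 1) π) (1 + i)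
  · rw [if_pos h, if_neg (hiff.1 h)]
  · rw [if_neg h, if_pos (not_not.1 (mt hiff.2 h))]

/-- All masks of length `n`. -/
def masks : ℕ → Finset (List Bool)
  | 0 => {[]}
  | n + 1 => (masks n).image (List.cons true) ∪ (masks n).image (List.cons false)

lemma mem_masks (n : ℕ) : ∀ m : List Bool, m ∈ masks n ↔ m.length = n := by
  induction n with
  | zero => intro m; simp [masks]
  | succ n ih =>
    intro m
    simp only [masks, Finset.mem_union, Finset.mem_image, ih]
    rcases m with _ | ⟨b, m⟩
    · simp
    · cases b <;> simp

lemma sum_masks_succ {A : Type*} [AddCommMonoid A] (n : ℕ) (g : List Bool → A) :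
    ∑ m ∈ masks (n + 1), g m =
      ∑ m ∈ masks n, g (true :: m) + ∑ m ∈ masks n, g (false :: m) := by
  rw [masks, Finset.sum_union, Finset.sum_image, Finset.sum_image]
  · intro a _ b _ h; simpa using h
  · intro a _ b _ h; simpa using h
  · rw [Finset.disjoint_left]
    intro a h1 h2
    simp only [Finset.mem_image] at h1 h2
    obtain ⟨x, _, rfl⟩ := h1
    obtain ⟨y, _, h⟩ := h2
    simp at h

/-- Coefficients of the character expansion. -/
noncomputable def coef : Bool → List Bool → ℤ[X]
  | q, [] => if q then 0 else 1
  | q, b :: m => (if q ^^ b then 1 - X else 1 + X) * coef (q ^^ b) m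

lemma coef_expand : ∀ (w : List Bool) (c q : Bool),
    ∑ m ∈ masks (w.length + 1), coef q m * C (chi m (c :: w)) =
      C (2 ^ w.length * sg q c) * (1 + X) * X ^ chg (c :: w)
  | [], c, q => by
      simp only [List.length_nil, zero_add, sum_masks_succ 0, masks, Finset.sum_singleton]
      cases q <;> cases c <;> simp [coef, chi, chg, sg]
  | d :: w, c, q => by
      rw [List.length_cons, sum_masks_succ]
      have h := fun s => coef_expand w d s
      have e : ∀ b m, coef q (b :: m) * C (chi (b :: m) (c :: d :: w)) =
          (if q ^^ b then 1 - X else 1 + X) * C (sg b c) *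
            (coef (q ^^ b) m * C (chi m (d :: w))) := by
        intro b m
        rw [coef, chi, C_mul]
        ring
      simp only [e]
      rw [← Finset.mul_sum, ← Finset.mul_sum, h, h]
      have hc : chg (c :: d :: w) = (if c = d then 0 else 1) + chg (d :: w) := rfl
      rw [hc]
      generalize chg (d :: w) = t
      simp only [C_mul, C_pow]
      cases q <;> cases c <;> cases d <;> simp [sg, pow_succ, pow_add] <;> ring

lemma coef_tiled {m : List Bool} (h : Tiled m) :
    ∃ j, m.count true = 2 * j ∧ ∃ k, m.length = j + k ∧ j ≤ k ∧
      coef false m = (1 - X) ^ j * (1 + X) ^ k := by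
  induction h with
  | nil => exact ⟨0, by simp, 0, by simp [coef]⟩
  | zero _ ih =>
    obtain ⟨j, h1, k, h2, h3, h4⟩ := ih
    refine ⟨j, by simpa using h1, k + 1, by simp [h2]; ring, by omega, ?_⟩
    simp [coef, h4, pow_succ]; ring
  | two _ ih =>
    obtain ⟨j, h1, k, h2, h3, h4⟩ := ih
    refine ⟨j + 1, by simp [h1]; ring, k + 1, by simp [h2]; ring, by omega, ?_⟩
    simp [coef, h4, pow_succ]; ring

lemma final_step (n : ℕ) (hn : 1 ≤ n) (R : ℤ[X]) (E : List Bool → ℤ) (a : ℤ) (ha : a ≠ 0)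
    (hR : C a * (1 + X) * R = X * ∑ m ∈ masks n, coef false m * C (E m))
    (hE : ∀ m ∈ masks n, ¬ Tiled m → E m = 0)
    (hpos : ∀ m ∈ masks n, Tiled m → 0 < (-1) ^ (m.count true / 2) * E m) :
    ∃ Q : ℤ[X], R = (1 + X) ^ ((n - 1) / 2) * Q ∧ Q.eval (-1) ≠ 0 := by
  classical
  have hu : (1 + X : ℤ[X]) ≠ 0 := by
    intro h; have := congrArg (eval 0) h; simp at this
  set Q' : ℤ[X] := X * ∑ m ∈ masks n, (1 - X) ^ (m.count true / 2) *
    (1 + X) ^ (n / 2 - m.count true / 2) * C (E m) with hQ'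
  have h1 : C a * R = (1 + X) ^ ((n - 1) / 2) * Q' := by
    apply mul_left_cancel₀ hu
    rw [show (1 + X) * (C a * R) = C a * (1 + X) * R by ring, hR, hQ', Finset.mul_sum,
      Finset.mul_sum, Finset.mul_sum, Finset.mul_sum]
    refine Finset.sum_congr rfl fun m hm => ?_
    by_cases hT : Tiled m
    · obtain ⟨j, h1, k, h2, h3, h4⟩ := coef_tiled hT
      rw [mem_masks] at hm
      rw [h4, h1, Nat.mul_div_cancel_left _ (by norm_num)]
      have hk : k = 1 + (n - 1) / 2 + (n / 2 - j) := by omega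
      rw [hk, pow_add, pow_add]
      ring
    · rw [hE m hm hT]; simp
  have h2 : Q'.eval (-1) ≠ 0 := by
    have hpos' : 0 < ∑ m ∈ masks n, (-1) ^ (n / 2) * ((2 : ℤ) ^ (m.count true / 2) *
        0 ^ (n / 2 - m.count true / 2) * E m) := by
      have hnn : ∀ m ∈ masks n, 0 ≤ (-1) ^ (n / 2) * ((2 : ℤ) ^ (m.count true / 2) *
          0 ^ (n / 2 - m.count true / 2) * E m) := by
        intro m hm
        by_cases hT : Tiled m
        · have hp := hpos m hm hT
          obtain ⟨j, h1, k, h2, h3, h4⟩ := coef_tiled hT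
          rw [mem_masks] at hm
          rw [h1, Nat.mul_div_cancel_left _ (by norm_num)] at hp ⊢
          rcases Nat.eq_zero_or_pos (n / 2 - j) with h | h
          · rw [h, show n / 2 = j by omega]
            have : 0 < (2 : ℤ) ^ j * ((-1) ^ j * E m) := by positivity
            simp only [pow_zero, mul_one]
            linarith
          · rw [zero_pow (by omega)]; simp
        · rw [hE m hm hT]; simp
      obtain ⟨m, hm, hT, hc⟩ : ∃ m, m ∈ masks n ∧ Tiled m ∧ m.count true / 2 = n / 2 := by
        rcases Nat.even_or_odd' n with ⟨k, h | h⟩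
        · exact ⟨List.replicate (2 * k) true, by simp [mem_masks, h], Tiled.replicate k,
            by simp [h]⟩
        · exact ⟨false :: List.replicate (2 * k) true, by simp [mem_masks, h],
            (Tiled.replicate k).zero, by simp [h]; omega⟩
      refine Finset.sum_pos' hnn ⟨m, hm, ?_⟩
      have hp := hpos m hm hT
      rw [hc] at hp ⊢
      have : 0 < (2 : ℤ) ^ (n / 2) * ((-1) ^ (n / 2) * E m) := by positivity
      simp only [Nat.sub_self, pow_zero, mul_one]
      linarith
    intro h
    rw [← Finset.mul_sum] at hpos'
    rw [hQ', eval_mul, eval_finsetSum] at h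
    simp only [eval_mul, eval_pow, eval_sub, eval_add, eval_one, eval_X, eval_C] at h
    norm_num at h
    rw [h] at hpos'
    simp at hpos'
  have hmonic : ((1 + X : ℤ[X]) ^ ((n - 1) / 2)).Monic := by
    apply Monic.pow
    rw [add_comm]
    exact monic_X_add_C 1
  have h3 : (1 + X : ℤ[X]) ^ ((n - 1) / 2) ∣ R := by
    rw [← modByMonic_eq_zero_iff_dvd hmonic]
    have h4 : (a • R) %ₘ ((1 + X : ℤ[X]) ^ ((n - 1) / 2)) = 0 := by
      rw [modByMonic_eq_zero_iff_dvd hmonic, smul_eq_C_mul, h1]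
      exact dvd_mul_right _ _
    rw [smul_modByMonic] at h4
    exact (smul_eq_zero.1 h4).resolve_left ha
  obtain ⟨Q, rfl⟩ := h3
  refine ⟨Q, rfl, ?_⟩
  have h5 : C a * Q = Q' := by
    apply mul_left_cancel₀ hmonic.ne_zero
    rw [← h1]; ring
  intro h
  apply h2
  rw [← h5]
  simp [h]

/-- Weighted run polynomial expanded in characters. -/
lemma run_expand (ε : ℤ) (n : ℕ) (hn : 1 ≤ n) :
    C (2 ^ (n - 1)) * (1 + X) * ∑ π : SignedPerm n, C (sgnW ε π) * X ^ runB n π =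
      X * ∑ m ∈ masks n, coef false m * C (charSum ε n m) := by
  have h : ∀ π : SignedPerm n, C (2 ^ (n - 1)) * (1 + X) * (C (sgnW ε π) * X ^ runB n π) =
      X * ∑ m ∈ masks n, coef false m * C (sgnW ε π * chi m (dirs n π)) := by
    intro π
    rw [runB_eq n hn]
    have hl := dirs_length n π
    generalize dirs n π = w at *
    rcases w with _ | ⟨c, w⟩
    · simp at hl; omega
    · simp at hl
      subst hl
      have := coef_expand w c false
      simp only [C_mul (a := sgnW ε π), mul_left_comm _ (C (sgnW ε π))]
      rw [← Finset.mul_sum, this]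
      simp [sg, pow_add]; ring
  rw [Finset.mul_sum]
  simp only [h]
  rw [← Finset.mul_sum, Finset.sum_comm]
  congr 1
  refine Finset.sum_congr rfl fun m _ => ?_
  rw [← Finset.mul_sum, charSum, map_sum]

lemma pos_B (n : ℕ) (m : List Bool) (hm : m.length = n) (hT : Tiled m) :
    0 < (-1) ^ (m.count true / 2) * charSum 1 n m :=
  lt_of_lt_of_le (by positivity) ((claim_all n m hm).2 hT)

lemma pos_D (n : ℕ) (hn : 3 ≤ n) (m : List Bool) (hm : m.length = n) (hT : Tiled m) :
    0 < (-1) ^ (m.count true / 2) * (charSum 1 n m + charSum (-1) n m) := by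
  rw [charSum_neg n m hm]
  split_ifs with h
  · rw [add_zero]; exact pos_B n m hm hT
  · have hr : m = List.replicate n true := by
      rw [List.eq_replicate_iff]
      refine ⟨hm, fun b hb => ?_⟩
      cases b
      · exact absurd hb h
      · rfl
    have hev := hT.count_even
    rw [hr] at hev
    simp at hev
    obtain ⟨k, hk⟩ := hev
    obtain rfl : n = 2 * k := by omega
    have h1 := nsum_replicate k (by omega)
    rw [← hr] at h1
    unfold nsum at h1
    rw [mul_add]
    have h2 : -(2 ^ (2 * k) : ℤ) ≤ (-1) ^ (m.count true / 2) * 2 ^ (2 * k) := by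
      have : (0 : ℤ) < 2 ^ (2 * k) := by positivity
      rcases neg_one_pow_eq_or ℤ (m.count true / 2) with e | e <;> rw [e] <;> linarith
    have : (0 : ℤ) < 2 ^ (2 * k) := by positivity
    rw [pow_succ] at h1
    linarith

lemma coef_odd (k : ℕ) : coef false (List.replicate (2 * k + 1) true) = 0 := by
  induction k with
  | zero => simp [coef]
  | succ k ih =>
    rw [show 2 * (k + 1) + 1 = (2 * k + 1) + 1 + 1 by ring, List.replicate_succ,
      List.replicate_succ, coef, coef]
    simp [ih]

/-- For `n ≥ 1`, `−1` is a zero of `R_n^B(x)` of multiplicity exactly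
`⌊(n−1)/2⌋`, and for `n ≥ 3`, `−1` is a zero of `R_n^D(x)` of multiplicity exactly
`⌊(n−1)/2⌋`. -/
theorem statement12 (n : ℕ) (hn : 1 ≤ n) :
    (∃ Q : Polynomial ℤ, runPolyB n = (1 + X) ^ ((n - 1) / 2) * Q ∧ Q.eval (-1) ≠ 0) ∧
    (3 ≤ n →
      ∃ Q : Polynomial ℤ, runPolyD n = (1 + X) ^ ((n - 1) / 2) * Q ∧ Q.eval (-1) ≠ 0) := by
  classical
  have hB := run_expand 1 n hn
  have hS := run_expand (-1) n hn
  constructor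
  · refine final_step n hn _ (charSum 1 n) (2 ^ (n - 1)) (by positivity) ?_ ?_ ?_
    · rw [← hB]
      simp [runPolyB, sgnW_eq]
    · intro m hm hT
      exact (claim_all n m ((mem_masks n m).1 hm)).1 hT
    · intro m hm hT
      exact pos_B n m ((mem_masks n m).1 hm) hT
  · intro h3
    -- the mask `1^n` with `n` odd is not tiled but has coefficient zero
    refine final_step n hn _
      (fun m => if Tiled m then charSum 1 n m + charSum (-1) n m else 0)
      (2 ^ (n - 1) * 2) (by positivity) ?_ ?_ ?_
    · have hD : 2 * runPolyD n = ∑ π : SignedPerm n, C (sgnW 1 π) * X ^ runB n π +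
          ∑ π : SignedPerm n, C (sgnW (-1) π) * X ^ runB n π := by
        rw [runPolyD, Finset.mul_sum, ← Finset.sum_add_distrib]
        refine Finset.sum_congr rfl fun π _ => ?_
        rw [sgnW_eq, sgnW_eq]
        split_ifs with h
        · simp [h.neg_one_pow]; ring
        · simp [(Nat.not_even_iff_odd.1 h).neg_one_pow]
      calc C (2 ^ (n - 1) * 2) * (1 + X) * runPolyD n
          = C (2 ^ (n - 1)) * (1 + X) * (2 * runPolyD n) := by
            rw [C_mul, show (C (2 : ℤ) : ℤ[X]) = 2 from rfl]; ring
        _ = _ := by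
          rw [hD, mul_add, hB, hS, ← mul_add, ← Finset.sum_add_distrib]
          congr 1
          refine Finset.sum_congr rfl fun m hm => ?_
          rw [← mul_add, ← C_add]
          split_ifs with hT
          · rfl
          · have hl := (mem_masks n m).1 hm
            rw [(claim_all n m hl).1 hT, charSum_neg n m hl]
            split_ifs with hf
            · simp
            · have hr : m = List.replicate n true := by
                rw [List.eq_replicate_iff]
                refine ⟨hl, fun b hb => ?_⟩
                cases b
                · exact absurd hb hf
                · rfl
              rcases Nat.even_or_odd' n with ⟨k, h | h⟩
              · exact absurd (hr ▸ h ▸ Tiled.replicate k) hT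
              · rw [hr, h, coef_odd]; simp
    · intro m hm hT
      simp [hT]
    · intro m hm hT
      simp only [hT, if_true]
      exact pos_D n h3 m ((mem_masks n m).1 hm) hT
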